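/- Let f be a continuous SL₂(ℤ)-invariant function on ℍ of rapid decay at the cusp (f(x,y) = o(y^{-N}) as y→∞ for all N). Then for Re(s) > 1, the Rankin–Selberg integral unfolds: ∫_{𝒟} f(z) E_s(z) y^{-2} dx dy = ∫_0^∞ y^{s-2} a₀(y) dy, where a₀(y) = ∫_0^1 f(x,y) dx and 𝒟 is the standard fundamental domain of SL₂(ℤ). -/

import Mathlib

open Real Set MeasureTheory

/-- Invariance of `f` under the Möbius action of `SL₂(ℤ)` on the upper half-plane,
written in coordinates `z = x + iy`. -/
def ModularInvariant (f : ℝ → ℝ → ℂ) : Prop :=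
  ∀ a b c d : ℤ, a * d - b * c = 1 → ∀ x y : ℝ, 0 < y →
    f ((((a : ℝ) * x + b) * ((c : ℝ) * x + d) + (a : ℝ) * c * y ^ 2) /
        (((c : ℝ) * x + d) ^ 2 + (c : ℝ) ^ 2 * y ^ 2))
      (y / (((c : ℝ) * x + d) ^ 2 + (c : ℝ) ^ 2 * y ^ 2)) = f x y

/-- The standard fundamental domain `𝒟` of `SL₂(ℤ)` in coordinates. -/
def FundDom : Set (ℝ × ℝ) :=
  {p | 0 < p.2 ∧ |p.1| ≤ 1 / 2 ∧ 1 ≤ p.1 ^ 2 + p.2 ^ 2}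

/-- The Eisenstein series `E_s(z) = (1/2) Σ_{gcd(c,d)=1} y^s |cz+d|^{-2s}`, i.e.
`Σ_{γ∈Γ_∞\Γ} Im(γ z)^s`, for `Re(s) > 1`. -/
noncomputable def Eis (s : ℂ) (x y : ℝ) : ℂ :=
  (1 / 2) * ∑' p : ℤ × ℤ, if Int.gcd p.1 p.2 = 1 then
    ((y : ℂ) / ((((p.1 : ℝ) * x + (p.2 : ℝ)) ^ 2 + (p.1 : ℝ) ^ 2 * y ^ 2 : ℝ) : ℂ)) ^ s
  else 0

/-- The constant Fourier coefficient (horocycle average) `a₀(y) = ∫₀¹ f(x,y) dx`. -/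
noncomputable def a0 (f : ℝ → ℝ → ℂ) (y : ℝ) : ℂ := ∫ x in (0 : ℝ)..1, f x y

open UpperHalfPlane Modular MatrixGroups

instance countableSL : Countable SL(2, ℤ) := by
  have : Function.Injective (fun g : SL(2, ℤ) => fun i j => (g : Matrix (Fin 2) (Fin 2) ℤ) i j) := by
    intro g h hgh
    ext i j
    exact congrFun (congrFun hgh i) j
  exact this.countable

lemma mpSL (g : SL(2, ℤ)) : MeasurePreserving (fun z : ℍ => g • z) volume volume :=
  measurePreserving_smul (g : Matrix.GeneralLinearGroup (Fin 2) ℝ) volume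

lemma meSL (g : SL(2, ℤ)) : MeasurableEmbedding (fun z : ℍ => g • z) :=
  measurableEmbedding_const_smul (g : Matrix.GeneralLinearGroup (Fin 2) ℝ)

lemma null_of_image (A : Set ℍ) (h : volume ((↑) '' A : Set ℂ) = 0) : volume A = 0 := by
  rw [UpperHalfPlane.volume_eq_lintegral]
  exact setLIntegral_measure_zero _ _ h

lemma null_line (c : ℝ) : volume {z : ℂ | z.re = c} = 0 := by
  have := Complex.volume_preserving_equiv_real_prod.measure_preimage
    (s := ({c} : Set ℝ) ×ˢ (Set.univ : Set ℝ)) (by measurability)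
  have h2 : (volume : Measure (ℝ × ℝ)) (({c} : Set ℝ) ×ˢ (Set.univ : Set ℝ)) = 0 := by
    rw [Measure.volume_eq_prod, Measure.prod_prod]; simp
  rw [h2] at this
  convert this using 2
  ext z
  simp [Complex.measurableEquivRealProd]

lemma null_bdry : volume (𝒟 \ 𝒟ᵒ : Set ℍ) = 0 := by
  apply null_of_image
  have hs : volume (Metric.sphere (0 : ℂ) 1) = 0 := Measure.addHaar_sphere _ _ _
  refine measure_mono_null (t := {z : ℂ | z.re = 1/2} ∪ {z : ℂ | z.re = -(1/2)} ∪ Metric.sphere (0:ℂ) 1) ?_ ?_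
  · rintro _ ⟨z, ⟨⟨h1, h2⟩, h3⟩, rfl⟩
    simp only [ModularGroup.fdo, Set.mem_ofPred_eq, not_and, not_lt] at h3
    rcases h1.lt_or_eq with h | h
    · have h4 := le_antisymm h2 (h3 h)
      left
      rcases (abs_eq (by norm_num)).1 h4 with h | h
      · left; exact h
      · right; exact h
    · right
      simp only [mem_sphere_iff_norm, sub_zero]
      rw [Complex.normSq_eq_norm_sq] at h
      nlinarith [norm_nonneg (z : ℂ)]
  · rw [measure_union_null_iff, measure_union_null_iff]
    exact ⟨⟨null_line _, null_line _⟩, hs⟩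

lemma ae_two : ∀ᵐ z : ℍ, ∃ g₀ : SL(2, ℤ), ∀ g : SL(2, ℤ), g⁻¹ • z ∈ 𝒟 ↔ (g = g₀ ∨ g = -g₀) := by
  have : ∀ᵐ z : ℍ, ∀ g : SL(2, ℤ), g • z ∉ (𝒟 \ 𝒟ᵒ : Set ℍ) := by
    rw [ae_all_iff]
    intro g
    have := (mpSL g).quasiMeasurePreserving.preimage_null null_bdry
    exact measure_eq_zero_iff_ae_notMem.1 this
  filter_upwards [this] with z hz
  obtain ⟨g₁, hg₁⟩ := ModularGroup.exists_smul_mem_fd z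
  have hg₁' : g₁ • z ∈ 𝒟ᵒ := by
    by_contra h
    exact hz g₁ ⟨hg₁, h⟩
  refine ⟨g₁⁻¹, fun g => ⟨fun h => ?_, ?_⟩⟩
  · have h2 : (g⁻¹ * g₁⁻¹) • (g₁ • z) ∈ 𝒟 := by
      rw [smul_smul]; simpa using h
    rcases ModularGroup.eq_one_or_neg_one_of_mem_fdo_mem_fd hg₁' h2 with h | h
    · left
      exact (inv_mul_eq_one.1 h)
    · right
      have : g₁⁻¹ = g * (-1) := by rw [← h]; group
      rw [this]; simp
  · rintro (rfl | rfl)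
    · simpa using hg₁
    · have : (-g₁⁻¹)⁻¹ = -g₁ := by
        rw [inv_eq_iff_mul_eq_one]; simp
      rw [this, ModularGroup.SL_neg_smul]; exact hg₁

lemma neg_ne (g : SL(2, ℤ)) : g ≠ -g := by
  intro h
  have h0 : ∀ i j, (g : Matrix (Fin 2) (Fin 2) ℤ) i j = 0 := by
    intro i j
    have := congrArg (fun k : SL(2, ℤ) => (k : Matrix (Fin 2) (Fin 2) ℤ) i j) h
    simp at this
    omega
  have := g.det_coe
  rw [Matrix.det_fin_two] at this
  simp [h0] at this

lemma tsum_two {E : Type*} [AddCommMonoid E] [TopologicalSpace E] (h : ℍ → E) (z : ℍ)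
    (g₀ : SL(2, ℤ)) (hg : ∀ g : SL(2, ℤ), g⁻¹ • z ∈ 𝒟 ↔ (g = g₀ ∨ g = -g₀)) :
    ∑' g : SL(2, ℤ), ((fun z : ℍ => g⁻¹ • z) ⁻¹' 𝒟).indicator h z = h z + h z := by
  classical
  rw [tsum_eq_sum (s := {g₀, -g₀}), Finset.sum_pair (neg_ne g₀)]
  · rw [Set.indicator_of_mem, Set.indicator_of_mem]
    · exact (hg _).2 (Or.inr rfl)
    · exact (hg _).2 (Or.inl rfl)
  · intro g hg'
    apply Set.indicator_of_notMem
    intro h'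
    apply hg'
    simpa using (hg g).1 h'

lemma meas_fd : MeasurableSet (𝒟 : Set ℍ) := ModularGroup.isClosed_fd.measurableSet

lemma preim_eq (g : SL(2, ℤ)) :
    (fun z : ℍ => g • z) ⁻¹' ((fun z : ℍ => g⁻¹ • z) ⁻¹' (𝒟 : Set ℍ)) = 𝒟 := by
  ext z; simp

lemma unfold_lintegral (H : ℍ → ENNReal) (hH : Measurable H) :
    ∫⁻ z in 𝒟, ∑' g : SL(2, ℤ), H (g • z) = ∫⁻ z, (H z + H z) := by
  have h0 : ∀ g : SL(2, ℤ), Measurable (fun z : ℍ => H (g • z)) := fun g => hH.comp (meSL g).measurable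
  rw [lintegral_tsum (fun g => (h0 g).aemeasurable)]
  have h1 : ∀ g : SL(2, ℤ), ∫⁻ z in 𝒟, H (g • z) =
      ∫⁻ z, ((fun z : ℍ => g⁻¹ • z) ⁻¹' 𝒟).indicator H z := by
    intro g
    have := (mpSL g).setLIntegral_comp_preimage_emb (meSL g) H ((fun z : ℍ => g⁻¹ • z) ⁻¹' 𝒟)
    rw [preim_eq] at this
    rw [lintegral_indicator ((meSL g⁻¹).measurable meas_fd), this]
  simp_rw [h1]
  rw [← lintegral_tsum (fun g => (hH.indicator ((meSL g⁻¹).measurable meas_fd)).aemeasurable)]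
  apply lintegral_congr_ae
  filter_upwards [ae_two] with z ⟨g₀, hz⟩
  exact tsum_two H z g₀ hz

lemma unfold_integral (h : ℍ → ℂ) (hm : Measurable h) (hi : ∫⁻ z in 𝒟, ∑' g : SL(2, ℤ), ‖h (g • z)‖ₑ ≠ ⊤) :
    Integrable h ∧ ∫ z in 𝒟, ∑' g : SL(2, ℤ), h (g • z) = ∫ z, (h z + h z) := by
  have hU := unfold_lintegral (fun z => ‖h z‖ₑ) hm.enorm
  refine ⟨⟨hm.aestronglyMeasurable, ?_⟩, ?_⟩
  · rw [hasFiniteIntegral_iff_enorm]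
    refine lt_of_le_of_lt ?_ (lt_top_iff_ne_top.2 hi)
    rw [hU]
    exact lintegral_mono (fun z => le_self_add)
  have h0 : ∀ g : SL(2, ℤ), Measurable (fun z : ℍ => h (g • z)) := fun g => hm.comp (meSL g).measurable
  have hi' := hi
  rw [lintegral_tsum (fun g => (h0 g).enorm.aemeasurable)] at hi'
  rw [integral_tsum (fun g => (h0 g).aestronglyMeasurable) hi']
  have hms : ∀ g : SL(2, ℤ), MeasurableSet ((fun z : ℍ => g⁻¹ • z) ⁻¹' 𝒟) :=
    fun g => (meSL g⁻¹).measurable meas_fd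
  have h1 : ∀ g : SL(2, ℤ), ∫ z in 𝒟, h (g • z) =
      ∫ z, ((fun z : ℍ => g⁻¹ • z) ⁻¹' 𝒟).indicator h z := by
    intro g
    have := (mpSL g).setIntegral_preimage_emb (meSL g) h ((fun z : ℍ => g⁻¹ • z) ⁻¹' 𝒟)
    rw [preim_eq] at this
    rw [integral_indicator (hms g), this]
  have h2 : ∀ g : SL(2, ℤ), ∫⁻ z in 𝒟, ‖h (g • z)‖ₑ =
      ∫⁻ z, ‖((fun z : ℍ => g⁻¹ • z) ⁻¹' 𝒟).indicator h z‖ₑ := by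
    intro g
    simp_rw [enorm_indicator_eq_indicator_enorm]
    have := (mpSL g).setLIntegral_comp_preimage_emb (meSL g) (fun z => ‖h z‖ₑ)
      ((fun z : ℍ => g⁻¹ • z) ⁻¹' 𝒟)
    rw [preim_eq] at this
    rw [lintegral_indicator (hms g), this]
  simp_rw [h1]
  simp_rw [h2] at hi'
  rw [← integral_tsum (fun g => (hm.indicator (hms g)).aestronglyMeasurable) hi']
  apply integral_congr_ae
  filter_upwards [ae_two] with z ⟨g₀, hz⟩
  exact tsum_two h z g₀ hz

lemma fiber_sum {E : Type*} [AddCommMonoid E] [TopologicalSpace E] (z : ℍ) (φ : ℤ × ℤ → E) :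
    ∑' g : SL(2, ℤ), {w : ℍ | w.re ∈ Ioc (0 : ℝ) 1}.indicator (fun _ => φ (g 1 0, g 1 1)) (g • z) =
    ∑' p : ℤ × ℤ, if Int.gcd p.1 p.2 = 1 then φ p else 0 := by
  let A : Set SL(2, ℤ) := {g | (g • z).re ∈ Ioc (0 : ℝ) 1}
  let B : Set (ℤ × ℤ) := {p | Int.gcd p.1 p.2 = 1}
  have hA : ∑' g : SL(2, ℤ), {w : ℍ | w.re ∈ Ioc (0 : ℝ) 1}.indicator (fun _ => φ (g 1 0, g 1 1)) (g • z)
      = ∑' g : A, φ ((g : SL(2, ℤ)) 1 0, (g : SL(2, ℤ)) 1 1) := by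
    rw [tsum_subtype A (fun g : SL(2, ℤ) => φ (g 1 0, g 1 1))]
    rfl
  have hB : (∑' p : ℤ × ℤ, if Int.gcd p.1 p.2 = 1 then φ p else 0) = ∑' p : B, φ p := by
    rw [tsum_subtype B φ]
    apply tsum_congr
    intro p
    by_cases hp : Int.gcd p.1 p.2 = 1
    · rw [if_pos hp, Set.indicator_of_mem (show p ∈ B from hp)]
    · rw [if_neg hp, Set.indicator_of_notMem (show p ∉ B from hp)]
  rw [hA, hB]
  let F : A → B := fun g => ⟨((g : SL(2, ℤ)) 1 0, (g : SL(2, ℤ)) 1 1),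
    Int.isCoprime_iff_gcd_eq_one.1 (ModularGroup.bottom_row_coprime (g : SL(2, ℤ)))⟩
  have hF : Function.Bijective F := by
    constructor
    · rintro ⟨g, hg⟩ ⟨g', hg'⟩ h
      simp only [F, Subtype.mk.injEq, Prod.mk.injEq] at h
      obtain ⟨h1, h2⟩ := h
      have hd := g.det_coe
      have hd' := g'.det_coe
      rw [Matrix.det_fin_two] at hd hd'
      have e10 : (g * g'⁻¹) 1 0 = 0 := by
        simp [Matrix.mul_apply, Fin.sum_univ_two, Matrix.SpecialLinearGroup.coe_inv, Matrix.adjugate_fin_two]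
        rw [h1, h2]; ring
      have e11 : (g * g'⁻¹) 1 1 = 1 := by
        simp [Matrix.mul_apply, Fin.sum_univ_two, Matrix.SpecialLinearGroup.coe_inv, Matrix.adjugate_fin_two]
        rw [h1, h2]; linarith
      have e00 : (g * g'⁻¹) 0 0 = 1 := by
        have := (g * g'⁻¹).det_coe
        rw [Matrix.det_fin_two, e10, e11] at this
        simpa using this
      have hT : g * g'⁻¹ = ModularGroup.T ^ ((g * g'⁻¹) 0 1) := by
        ext i j
        rw [ModularGroup.coe_T_zpow]
        fin_cases i <;> fin_cases j
        · exact e00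
        · rfl
        · exact e10
        · exact e11
      set n := (g * g'⁻¹) 0 1
      have hg2 : g = ModularGroup.T ^ n * g' := by rw [← hT]; simp
      simp only [A, Set.mem_ofPred_eq, Set.mem_Ioc] at hg hg'
      rw [hg2, mul_smul, ModularGroup.re_T_zpow_smul] at hg
      have hn : n = 0 := by
        have a1 : (n : ℝ) < 1 := by linarith
        have a2 : (-1 : ℝ) < n := by linarith
        have a1' : n < 1 := by exact_mod_cast a1
        have a2' : -1 < n := by exact_mod_cast a2
        omega
      rw [hn] at hg2
      simp only [Subtype.mk.injEq]
      simpa using hg2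
    · rintro ⟨⟨c, d⟩, hp⟩
      have hc : IsCoprime c d := Int.isCoprime_iff_gcd_eq_one.2 hp
      obtain ⟨g, -, hg⟩ := ModularGroup.bottom_row_surj (R := ℤ) (a := ![c, d]) (by simpa using hc)
      obtain ⟨n, hn, -⟩ := existsUnique_add_zsmul_mem_Ioc (zero_lt_one (α := ℝ)) (g • z).re 0
      refine ⟨⟨ModularGroup.T ^ n * g, ?_⟩, ?_⟩
      · simp only [A, Set.mem_ofPred_eq]
        rw [mul_smul, ModularGroup.re_T_zpow_smul]
        simpa using hn
      · have h0 := congrFun hg 0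
        have h1 := congrFun hg 1
        simp at h0 h1
        simp [F, h0, h1]
  exact (Equiv.ofBijective F hF).tsum_eq (fun p : B => φ p)

/-- coordinates -/
def crd (z : ℍ) : ℝ × ℝ := (z.re, z.im)

lemma crd_eq : crd = Complex.measurableEquivRealProd ∘ UpperHalfPlane.coe := rfl

lemma crd_me : MeasurableEmbedding crd := by
  rw [crd_eq]
  exact Complex.measurableEquivRealProd.measurableEmbedding.comp measurableEmbedding_coe

lemma crd_map : Measure.map crd (volume.comap UpperHalfPlane.coe) =
    (volume : Measure (ℝ × ℝ)).restrict {p | 0 < p.2} := by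
  rw [crd_eq, ← Measure.map_map (by fun_prop) (by fun_prop), measurableEmbedding_coe.map_comap]
  have hm : MeasurableSet {p : ℝ × ℝ | 0 < p.2} := measurableSet_lt measurable_const measurable_snd
  have := (Complex.volume_preserving_equiv_real_prod.restrict_preimage hm).map_eq
  rw [← this]
  congr 2
  ext z
  simp only [Set.mem_range, Set.mem_preimage, Set.mem_ofPred_eq, Complex.measurableEquivRealProd_apply]
  constructor
  · rintro ⟨w, rfl⟩; exact w.im_pos
  · intro h; exact ⟨⟨z, h⟩, rfl⟩

noncomputable def dens (y : ℝ) : NNReal := (1 / ‖y‖₊) ^ 2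

lemma dens_meas : Measurable (fun z : ℍ => dens (crd z).2) := by
  have : Measurable dens := by unfold dens; fun_prop
  exact this.comp (measurable_snd.comp crd_me.measurable)

lemma dens_meas' : Measurable (fun p : ℝ × ℝ => dens p.2) := by
  have : Measurable dens := by unfold dens; fun_prop
  exact this.comp measurable_snd

lemma vol_eq : (volume : Measure ℍ) = (volume.comap UpperHalfPlane.coe).withDensity
    (fun z => (dens (crd z).2 : ENNReal)) := by
  rw [UpperHalfPlane.volume_def]
  congr 1
  ext z
  congr 1
  unfold dens crd
  simp only
  congr 2
  exact (Real.nnnorm_of_nonneg z.im_pos.le).symm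

lemma transfer_integral (h : ℝ × ℝ → ℂ) :
    ∫ z : ℍ, h (crd z) = ∫ p in {p : ℝ × ℝ | 0 < p.2}, dens p.2 • h p := by
  rw [vol_eq, integral_withDensity_eq_integral_smul dens_meas, ← crd_map,
    crd_me.integral_map]

lemma transfer_integrable (h : ℝ × ℝ → ℂ) :
    Integrable (fun z : ℍ => h (crd z)) ↔
      IntegrableOn (fun p => dens p.2 • h p) {p : ℝ × ℝ | 0 < p.2} := by
  rw [vol_eq, integrable_withDensity_iff_integrable_smul dens_meas, IntegrableOn, ← crd_map,
    crd_me.integrable_map_iff]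
  rfl

lemma transfer_lintegral (h : ℝ × ℝ → ENNReal) (hh : Measurable h) :
    ∫⁻ z : ℍ, h (crd z) = ∫⁻ p in {p : ℝ × ℝ | 0 < p.2}, dens p.2 * h p := by
  have h2 : Measurable (fun z => h (crd z)) := hh.comp crd_me.measurable
  rw [vol_eq, lintegral_withDensity_eq_lintegral_mul _ dens_meas.coe_nnreal_ennreal
     h2, ← crd_map, crd_me.lintegral_map]
  rfl

lemma vol_fd : volume (𝒟 : Set ℍ) ≠ ⊤ := by
  let R : Set (ℝ × ℝ) := Icc (-(1/2)) (1/2) ×ˢ Ioi (1/2 : ℝ)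
  have hR : MeasurableSet R := measurableSet_Icc.prod measurableSet_Ioi
  have hsub : (𝒟 : Set ℍ) ⊆ crd ⁻¹' R := by
    intro z hz
    have h1 := ModularGroup.three_le_four_mul_im_sq_of_mem_fd hz
    refine ⟨abs_le.1 hz.2, ?_⟩
    show 1/2 < z.im
    nlinarith [z.im_pos]
  refine ne_top_of_le_ne_top ?_ (measure_mono hsub)
  rw [← lintegral_indicator_one (crd_me.measurable hR)]
  have : ∫⁻ z : ℍ, (crd ⁻¹' R).indicator (1 : ℍ → ENNReal) z = ∫⁻ z : ℍ, R.indicator 1 (crd z) := rfl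
  rw [this, transfer_lintegral _ (measurable_one.indicator hR)]
  refine ne_top_of_le_ne_top ?_ (setLIntegral_le_lintegral _ _)
  have e : ∀ p : ℝ × ℝ, (dens p.2 : ENNReal) * R.indicator 1 p =
      (Icc (-(1/2)) (1/2 : ℝ)).indicator 1 p.1 *
        (Ioi (1/2 : ℝ)).indicator (fun y => (dens y : ENNReal)) p.2 := by
    intro p
    by_cases h1 : p.1 ∈ Icc (-(1/2)) (1/2 : ℝ) <;> by_cases h2 : p.2 ∈ Ioi (1/2 : ℝ) <;>
      simp only [R, Set.indicator, Set.mem_prod, h1, h2, if_true, if_false, and_self, and_true,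
        and_false, Pi.one_apply, mul_one, one_mul, mul_zero, zero_mul]
  simp_rw [e]
  have hd : Measurable (fun y : ℝ => (dens y : ENNReal)) := by unfold dens; fun_prop
  rw [Measure.volume_eq_prod, lintegral_prod_mul
    (measurable_one.indicator measurableSet_Icc).aemeasurable
    (hd.indicator measurableSet_Ioi).aemeasurable]
  apply ENNReal.mul_ne_top
  · rw [lintegral_indicator_one measurableSet_Icc]
    simp
  · rw [lintegral_indicator measurableSet_Ioi]
    have hi : IntegrableOn (fun y : ℝ => y ^ (-2 : ℝ)) (Ioi (1/2)) :=
      integrableOn_Ioi_rpow_of_lt (by norm_num) (by norm_num)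
    have := hi.2
    rw [hasFiniteIntegral_iff_enorm] at this
    refine ne_of_lt (lt_of_le_of_lt (le_of_eq ?_) this)
    apply setLIntegral_congr_fun measurableSet_Ioi
    intro y hy
    have hy' : (0 : ℝ) < y := lt_trans (by norm_num) hy
    simp only [enorm_eq_nnnorm, dens]
    congr 1
    ext
    simp only [NNReal.coe_pow, NNReal.coe_div, NNReal.coe_one, coe_nnnorm]
    rw [Real.norm_of_nonneg hy'.le, Real.norm_of_nonneg (by positivity), Real.rpow_neg hy'.le]
    simp

/-- The quadratic form `|cz+d|^2`. -/
def Qf (x y : ℝ) (p : ℤ × ℤ) : ℝ := ((p.1 : ℝ) * x + (p.2 : ℝ)) ^ 2 + (p.1 : ℝ) ^ 2 * y ^ 2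

lemma smul_re_im (g : SL(2, ℤ)) (z : ℍ) :
    (g • z).re = (((g 0 0 : ℝ) * z.re + g 0 1) * ((g 1 0 : ℝ) * z.re + g 1 1) +
      (g 0 0 : ℝ) * g 1 0 * z.im ^ 2) / Qf z.re z.im (g 1 0, g 1 1) ∧
    (g • z).im = z.im / Qf z.re z.im (g 1 0, g 1 1) := by
  have hQ : Complex.normSq ((g 1 0 : ℂ) * z + (g 1 1 : ℂ)) = Qf z.re z.im (g 1 0, g 1 1) := by
    simp [Complex.normSq_apply, Qf]; ring
  constructor
  · have h := UpperHalfPlane.coe_specialLinearGroup_apply g z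
    have h2 := congrArg Complex.re h
    simp only [algebraMap_int_eq, eq_intCast, Complex.ofReal_intCast] at h2
    rw [Complex.div_re, hQ] at h2
    rw [UpperHalfPlane.coe_re] at h2
    rw [h2, ← add_div]
    congr 1
    simp; ring
  · rw [ModularGroup.im_smul_eq_div_normSq, ModularGroup.denom_apply, hQ]

lemma Qf_pos (z : ℍ) (p : ℤ × ℤ) (hp : Int.gcd p.1 p.2 = 1) : 0 < Qf z.re z.im p := by
  unfold Qf
  have hy := z.im_pos
  by_cases hc : p.1 = 0
  · have : p.2 ≠ 0 := by
      intro h; rw [hc, h] at hp; simp at hp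
    have : (p.2 : ℝ) ≠ 0 := by exact_mod_cast this
    rw [hc]; simp; positivity
  · have : (p.1 : ℝ) ≠ 0 := by exact_mod_cast hc
    positivity

lemma Qf_ge (z : ℍ) (hz : z ∈ 𝒟) (p : ℤ × ℤ) :
    ‖![p.1, p.2]‖ ^ 2 / 2 ≤ Qf z.re z.im p := by
  have h1 : 1 ≤ z.re * z.re + z.im * z.im := by simpa [Complex.normSq_apply] using hz.1
  obtain ⟨h2, h3⟩ := abs_le.1 hz.2
  have hN : ‖![p.1, p.2]‖ ≤ √((p.1 : ℝ) ^ 2 + (p.2 : ℝ) ^ 2) := by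
    rw [pi_norm_le_iff_of_nonneg (Real.sqrt_nonneg _)]
    intro i
    fin_cases i
    · simp only [Int.norm_eq_abs]
      apply Real.le_sqrt_of_sq_le
      simp; positivity
    · simp only [Int.norm_eq_abs]
      apply Real.le_sqrt_of_sq_le
      simp; positivity
  have hN2 : ‖![p.1, p.2]‖ ^ 2 ≤ (p.1 : ℝ) ^ 2 + (p.2 : ℝ) ^ 2 := by
    rw [← Real.le_sqrt (norm_nonneg _) (by positivity)]; exact hN
  unfold Qf
  generalize (p.1 : ℝ) = c at *
  generalize (p.2 : ℝ) = d at *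
  have e : (c * z.re + d) ^ 2 + c ^ 2 * z.im ^ 2 =
    c ^ 2 * (z.re * z.re + z.im * z.im) + 2 * (c * d) * z.re + d ^ 2 := by ring
  rw [e]
  have h4 : c ^ 2 ≤ c ^ 2 * (z.re * z.re + z.im * z.im) := le_mul_of_one_le_right (sq_nonneg _) h1
  have h5 : -|c * d| ≤ 2 * (c * d) * z.re := by
    have : |2 * (c * d) * z.re| ≤ |c * d| := by
      rw [abs_mul, abs_mul, abs_two]
      have := hz.2
      nlinarith [abs_nonneg (c * d)]
    exact (abs_le.1 this).1 |> le_trans (by simp)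
  have h6 : |c * d| ≤ (c ^ 2 + d ^ 2) / 2 := by
    rw [abs_le]; constructor <;> nlinarith [sq_nonneg (c + d), sq_nonneg (c - d)]
  linarith

lemma bound_fd (f : ℝ → ℝ → ℂ) (hF : Continuous (fun z : ℍ => f z.re z.im))
    (hdecay : ∀ N : ℕ, ∃ C : ℝ, ∀ x y : ℝ, 1 ≤ y → ‖f x y‖ ≤ C * y ^ (-(N : ℝ))) (σ : ℝ) :
    ∃ M : ℝ, 0 ≤ M ∧ ∀ z : ℍ, z ∈ 𝒟 → ‖f z.re z.im‖ * z.im ^ σ ≤ M := by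
  obtain ⟨N, hN⟩ := exists_nat_ge σ
  obtain ⟨C, hC⟩ := hdecay N
  have hc : Continuous (fun z : ℍ => ‖f z.re z.im‖ * z.im ^ σ) :=
    hF.norm.mul (UpperHalfPlane.continuous_im.rpow_const (fun z => Or.inl z.im_ne_zero))
  obtain ⟨M, hM⟩ := (ModularGroup.isCompact_truncatedFundamentalDomain 1).exists_bound_of_continuousOn
    hc.continuousOn
  refine ⟨max |C| M, le_max_of_le_left (abs_nonneg _), fun z hz => ?_⟩
  rcases le_total z.im 1 with h | h
  · exact le_max_of_le_right ((le_abs_self _).trans (hM z ⟨hz, h⟩))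
  · apply le_max_of_le_left
    have hy := z.im_pos
    calc ‖f z.re z.im‖ * z.im ^ σ ≤ (C * z.im ^ (-(N : ℝ))) * z.im ^ σ := by
          gcongr; exact hC _ _ h
      _ = C * z.im ^ (σ - N) := by
          rw [mul_assoc, ← Real.rpow_add hy]; ring_nf
      _ ≤ |C| * 1 := by
          gcongr
          · exact le_abs_self _
          · exact Real.rpow_le_one_of_one_le_of_nonpos h (by linarith)
      _ = |C| := mul_one _

lemma summable_N {k : ℝ} (hk : 2 < k) : Summable (fun p : ℤ × ℤ => ‖![p.1, p.2]‖ ^ (-k)) := by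
  have := EisensteinSeries.summable_one_div_norm_rpow hk
  rw [← (finTwoArrowEquiv ℤ).symm.summable_iff] at this
  exact this

lemma dens_smul (y : ℝ) (w : ℂ) : dens y • w = w / ((y ^ 2 : ℝ) : ℂ) := by
  have : ((dens y : NNReal) : ℝ) = 1 / y ^ 2 := by simp [dens]
  rw [NNReal.smul_def, this, Complex.real_smul]
  push_cast
  ring

/-- Rankin–Selberg unfolding for a continuous modular invariant function of rapid
decay at the cusp: for `Re(s) > 1`,
`∫_𝒟 f(z) E_s(z) y^{-2} dx dy = ∫₀^∞ y^{s-2} a₀(y) dy`. -/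
theorem rankin_selberg_unfolding (f : ℝ → ℝ → ℂ)
    (hcont : ContinuousOn (fun p : ℝ × ℝ => f p.1 p.2) {p | 0 < p.2})
    (hinv : ModularInvariant f)
    (hdecay : ∀ N : ℕ, ∃ C : ℝ, ∀ x y : ℝ, 1 ≤ y → ‖f x y‖ ≤ C * y ^ (-(N : ℝ)))
    (s : ℂ) (hs : 1 < s.re) :
    ∫ p in FundDom, f p.1 p.2 * Eis s p.1 p.2 / ((p.2 ^ 2 : ℝ) : ℂ) =
      ∫ y in Ioi (0 : ℝ), (y : ℂ) ^ (s - 2) * a0 f y := by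
  have hF : Continuous (fun z : ℍ => f z.re z.im) :=
    hcont.comp_continuous (f := fun z : ℍ => (z.re, z.im))
      (UpperHalfPlane.continuous_re.prodMk UpperHalfPlane.continuous_im) (fun z => z.im_pos)
  have hFinv : ∀ (g : SL(2, ℤ)) (z : ℍ), f (g • z).re (g • z).im = f z.re z.im := by
    intro g z
    have hd := g.det_coe
    rw [Matrix.det_fin_two] at hd
    have := hinv (g 0 0) (g 0 1) (g 1 0) (g 1 1) hd z.re z.im z.im_pos
    obtain ⟨h1, h2⟩ := smul_re_im g z
    rw [h1, h2]
    exact this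
  let S : Set ℍ := {w : ℍ | w.re ∈ Ioc (0 : ℝ) 1}
  have hS : MeasurableSet S := UpperHalfPlane.continuous_re.measurable measurableSet_Ioc
  let k : ℍ → ℂ := fun z => f z.re z.im * (z.im : ℂ) ^ s
  have hk : Continuous k := by
    refine hF.mul ?_
    refine Continuous.cpow (Complex.continuous_ofReal.comp UpperHalfPlane.continuous_im) continuous_const ?_
    intro z
    exact Complex.ofReal_mem_slitPlane.2 z.im_pos
  let h : ℍ → ℂ := S.indicator k
  have hm : Measurable h := hk.measurable.indicator hS
  let φ : ℍ → ℤ × ℤ → ℂ := fun z p => f z.re z.im * ((z.im : ℂ) / (Qf z.re z.im p : ℂ)) ^ s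
  have hk2 : ∀ (g : SL(2, ℤ)) (z : ℍ), k (g • z) = φ z (g 1 0, g 1 1) := by
    intro g z
    simp only [k, φ]
    rw [hFinv, (smul_re_im g z).2]
    push_cast
    rfl
  have hh1 : ∀ z, ∑' g : SL(2, ℤ), h (g • z) = 2 * (f z.re z.im * Eis s z.re z.im) := by
    intro z
    have e1 : ∀ g : SL(2, ℤ), h (g • z) =
        {w : ℍ | w.re ∈ Ioc (0 : ℝ) 1}.indicator (fun _ => φ z (g 1 0, g 1 1)) (g • z) := by
      intro g
      by_cases hg : g • z ∈ S
      · simp only [h]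
        rw [Set.indicator_of_mem hg, Set.indicator_of_mem (by exact hg), hk2]
      · simp only [h]
        rw [Set.indicator_of_notMem hg, Set.indicator_of_notMem (by exact hg)]
    simp_rw [e1]
    rw [fiber_sum]
    have e2 : ∀ p : ℤ × ℤ, (if Int.gcd p.1 p.2 = 1 then φ z p else 0) = f z.re z.im *
      (if Int.gcd p.1 p.2 = 1 then ((z.im : ℂ) / (Qf z.re z.im p : ℂ)) ^ s else 0) := by
      intro p
      split_ifs <;> simp [φ]
    simp_rw [e2]
    rw [tsum_mul_left]
    unfold Eis Qf
    ring
  obtain ⟨M, hM0, hM⟩ := bound_fd f hF hdecay s.re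
  let B : ℤ × ℤ → ℝ := fun p => M * 2 ^ s.re * ‖![p.1, p.2]‖ ^ (-(2 * s.re))
  have hB : Summable B := (summable_N (by linarith)).mul_left _
  have hB0 : ∀ p, 0 ≤ B p := fun p => by positivity
  have hφ : ∀ z ∈ (𝒟 : Set ℍ), ∀ p : ℤ × ℤ, Int.gcd p.1 p.2 = 1 → ‖φ z p‖ ≤ B p := by
    intro z hz p hp
    have hQ := Qf_pos z p hp
    have hQ2 := Qf_ge z hz p
    have hy := z.im_pos
    have hN : 0 < ‖![p.1, p.2]‖ := by
      rw [norm_pos_iff]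
      intro h0
      have a := congrFun h0 0
      have b := congrFun h0 1
      simp at a b
      rw [a, b] at hp
      simp at hp
    simp only [φ]
    rw [norm_mul, ← Complex.ofReal_div, Complex.norm_cpow_eq_rpow_re_of_pos (by positivity)]
    calc ‖f z.re z.im‖ * (z.im / Qf z.re z.im p) ^ s.re
        ≤ ‖f z.re z.im‖ * (z.im / (‖![p.1, p.2]‖ ^ 2 / 2)) ^ s.re := by
          gcongr
      _ = (‖f z.re z.im‖ * z.im ^ s.re) * (2 ^ s.re * ‖![p.1, p.2]‖ ^ (-(2 * s.re))) := by
          have : z.im / (‖![p.1, p.2]‖ ^ 2 / 2) = z.im * (2 * (‖![p.1, p.2]‖ ^ 2)⁻¹) := by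
            field_simp
          rw [this, Real.mul_rpow hy.le (by positivity), Real.mul_rpow (by norm_num) (by positivity),
            Real.inv_rpow (by positivity), Real.rpow_neg hN.le, Real.rpow_mul hN.le]
          rw [Real.rpow_two]; ring
      _ ≤ M * (2 ^ s.re * ‖![p.1, p.2]‖ ^ (-(2 * s.re))) := by
          gcongr
          exact hM z hz
      _ = B p := by simp only [B]; ring
  have hfin : ∫⁻ z in 𝒟, ∑' g : SL(2, ℤ), ‖h (g • z)‖ₑ ≠ ⊤ := by
    have hle : ∀ z ∈ (𝒟 : Set ℍ), ∑' g : SL(2, ℤ), ‖h (g • z)‖ₑ ≤ ∑' p, ENNReal.ofReal (B p) := by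
      intro z hz
      have e1 : ∀ g : SL(2, ℤ), ‖h (g • z)‖ₑ =
          {w : ℍ | w.re ∈ Ioc (0 : ℝ) 1}.indicator (fun _ => (fun p => ‖φ z p‖ₑ) (g 1 0, g 1 1)) (g • z) := by
        intro g
        by_cases hg : g • z ∈ S
        · simp only [h]
          rw [Set.indicator_of_mem hg, Set.indicator_of_mem (by exact hg), hk2]
        · simp only [h]
          rw [Set.indicator_of_notMem hg, Set.indicator_of_notMem (by exact hg), enorm_zero]
      simp_rw [e1]
      rw [fiber_sum z (fun p => ‖φ z p‖ₑ)]
      apply ENNReal.tsum_le_tsum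
      intro p
      split_ifs with hp
      · rw [← ofReal_norm]
        exact ENNReal.ofReal_le_ofReal (hφ z hz p hp)
      · simp
    refine ne_top_of_le_ne_top ?_ (setLIntegral_mono' meas_fd hle)
    rw [setLIntegral_const]
    exact ENNReal.mul_ne_top hB.tsum_ofReal_ne_top vol_fd
  obtain ⟨hint, hmain⟩ := unfold_integral h hm hfin
  simp_rw [hh1] at hmain
  rw [integral_const_mul] at hmain
  have e2 : ∀ z, h z + h z = 2 * h z := fun z => by ring
  simp_rw [e2] at hmain
  rw [integral_const_mul] at hmain
  have hmain2 := mul_left_cancel₀ (two_ne_zero) hmain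
  -- left side
  have hup : MeasurableSet {p : ℝ × ℝ | 0 < p.2} := measurableSet_lt measurable_const measurable_snd
  have hFD : MeasurableSet FundDom := by
    have e : FundDom = {p : ℝ × ℝ | 0 < p.2} ∩ ({p : ℝ × ℝ | |p.1| ≤ 1 / 2} ∩
      {p : ℝ × ℝ | 1 ≤ p.1 ^ 2 + p.2 ^ 2}) := rfl
    rw [e]
    refine hup.inter ((measurableSet_le ?_ ?_).inter (measurableSet_le ?_ ?_)) <;> fun_prop
  have hL : ∫ z in 𝒟, f z.re z.im * Eis s z.re z.im =
      ∫ p in FundDom, f p.1 p.2 * Eis s p.1 p.2 / ((p.2 ^ 2 : ℝ) : ℂ) := by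
    rw [← integral_indicator meas_fd]
    have e : ∀ z : ℍ, (𝒟 : Set ℍ).indicator (fun z : ℍ => f z.re z.im * Eis s z.re z.im) z =
        FundDom.indicator (fun p => f p.1 p.2 * Eis s p.1 p.2) (crd z) := by
      intro z
      have hiff : z ∈ (𝒟 : Set ℍ) ↔ crd z ∈ FundDom := by
        have hn : Complex.normSq (z : ℂ) = z.re ^ 2 + z.im ^ 2 := by
          simp [Complex.normSq_apply]; ring
        constructor
        · rintro ⟨h1, h2⟩
          exact ⟨z.im_pos, h2, by rw [hn] at h1; exact h1⟩
        · rintro ⟨-, h2, h1⟩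
          exact ⟨by rw [hn]; exact h1, h2⟩
      by_cases hz : z ∈ (𝒟 : Set ℍ)
      · rw [Set.indicator_of_mem hz, Set.indicator_of_mem (hiff.1 hz)]; rfl
      · rw [Set.indicator_of_notMem hz, Set.indicator_of_notMem (fun h => hz (hiff.2 h))]
    simp_rw [e]
    rw [transfer_integral]
    have e3 : ∀ p : ℝ × ℝ, dens p.2 • FundDom.indicator (fun p => f p.1 p.2 * Eis s p.1 p.2) p =
        FundDom.indicator (fun p => f p.1 p.2 * Eis s p.1 p.2 / ((p.2 ^ 2 : ℝ) : ℂ)) p := by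
      intro p
      rw [dens_smul]
      by_cases hp : p ∈ FundDom
      · rw [Set.indicator_of_mem hp, Set.indicator_of_mem hp]
      · rw [Set.indicator_of_notMem hp, Set.indicator_of_notMem hp, zero_div]
    simp_rw [e3]
    rw [setIntegral_indicator hFD]
    congr 2
    exact Set.inter_eq_right.2 (fun p hp => hp.1)
  rw [← hL, hmain2]
  -- right side
  let T : Set (ℝ × ℝ) := {p | p.1 ∈ Ioc (0 : ℝ) 1}
  have hT : MeasurableSet T := measurable_fst measurableSet_Ioc
  let G : ℝ × ℝ → ℂ := T.indicator (fun p => f p.1 p.2 * (p.2 : ℂ) ^ s)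
  let K : ℝ × ℝ → ℂ := fun p => f p.1 p.2 * (p.2 : ℂ) ^ s / ((p.2 ^ 2 : ℝ) : ℂ)
  have hG : ∀ z, h z = G (crd z) := fun z => rfl
  have e4 : ∀ p : ℝ × ℝ, dens p.2 • G p = T.indicator K p := by
    intro p
    rw [dens_smul]
    by_cases hp : p ∈ T
    · simp only [G, K]; rw [Set.indicator_of_mem hp, Set.indicator_of_mem hp]
    · simp only [G, K]; rw [Set.indicator_of_notMem hp, Set.indicator_of_notMem hp, zero_div]
  have hset : {p : ℝ × ℝ | 0 < p.2} ∩ T = Ioc (0 : ℝ) 1 ×ˢ Ioi (0 : ℝ) := by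
    ext p; exact and_comm
  have hintK : Integrable K ((volume.restrict (Ioc (0 : ℝ) 1)).prod (volume.restrict (Ioi (0 : ℝ)))) := by
    have h1 : Integrable (fun z => G (crd z)) := hint
    rw [transfer_integrable] at h1
    simp_rw [e4] at h1
    rw [IntegrableOn, integrable_indicator_iff hT, IntegrableOn, Measure.restrict_restrict hT,
      Set.inter_comm, hset, Measure.volume_eq_prod, ← Measure.prod_restrict] at h1
    exact h1
  simp_rw [hG]
  rw [transfer_integral]
  simp_rw [e4]
  rw [setIntegral_indicator hT, hset, Measure.volume_eq_prod, ← Measure.prod_restrict,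
    integral_prod_symm _ hintK]
  apply setIntegral_congr_fun measurableSet_Ioi
  intro y hy
  have hy' : (0 : ℝ) < y := hy
  have hyc : (y : ℂ) ≠ 0 := by exact_mod_cast hy'.ne'
  simp only [a0, K]
  rw [intervalIntegral.integral_of_le zero_le_one, ← integral_const_mul]
  congr 1
  ext x
  rw [Complex.cpow_sub _ _ hyc]
  have : (y : ℂ) ^ (2 : ℂ) = (y : ℂ) ^ 2 := by norm_cast
  rw [this]
  push_cast
  ring
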